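/- arXiv:1107.2729 — 2 statements merged into one kernel-verified Lean document; each statement's English description precedes it below -/
import Mathlib

section
/- Let S be a string over an alphabet Σ whose RL factorization has n factors, and let w be a string containing at least two distinct characters. Then the number of occurrences of w in S satisfies |Occ(S, w)| ≤ n − 1. (Each occurrence of w must span a boundary between two consecutive RL factors, and the position of the first character change inside w maps distinct occurrences to distinct factor boundaries.) -/
/-- Expand a run-length encoding (a list of pairs `(aᵢ, pᵢ)`) into the string
`a₁^{p₁} ⋯ a_n^{p_n}` it represents. -/
def rlExpand {α : Type*} (l : List (α × ℕ)) : List α :=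
  (l.map (fun f => List.replicate f.2 f.1)).flatten

/-- `l` is an RL factorization of `S`: every exponent is at least 1, the characters of
consecutive factors differ, and the expansion of `l` is `S`. -/
def IsRLFact {α : Type*} (S : List α) (l : List (α × ℕ)) : Prop :=
  rlExpand l = S ∧ (∀ f ∈ l, 1 ≤ f.2) ∧ l.Chain' (fun f g => f.1 ≠ g.1)

/-!
A nonconstant word `w` has an index `i` at which its character changes, and every occurrence of `w`
at `k` makes the character of `S` change at `k + i`, so `w` occurs at most as often as the character
changes in `S`. There is no change within a single run, and concatenating two strings creates at
most one, at the junction, so a string made of `n` runs has at most `n - 1` changes.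
-/

/-- The positions (indexed from 0) of a string at which the character differs from the next one;
these are the boundaries between its consecutive maximal runs, each recorded by the last index of
the run on its left. -/
def changePositions {α : Type*} (s : List α) : Set ℕ :=
  {i | ∃ h : i + 1 < s.length, s[i] ≠ s[i + 1]}

section

variable {α : Type*}

theorem changePositions_replicate (p : ℕ) (a : α) :
    changePositions (List.replicate p a) = ∅ := by
  simp [changePositions]

theorem changePositions_append_subset (s t : List α) :
    changePositions (s ++ t) ⊆
      insert (s.length - 1) (changePositions s ∪ (· + s.length) '' changePositions t) := by
  rintro i ⟨hi, hne⟩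
  rcases lt_trichotomy (i + 1) s.length with hlt | heq | hgt
  · rw [List.getElem_append_left (by omega), List.getElem_append_left hlt] at hne
    exact .inr (.inl ⟨hlt, hne⟩)
  · exact .inl (by omega)
  · obtain ⟨j, rfl⟩ := Nat.exists_eq_add_of_le' (Nat.le_of_lt_succ hgt)
    refine .inr (.inr ⟨j, ⟨?_, ?_⟩, rfl⟩)
    · rw [List.length_append] at hi
      omega
    · rw [List.getElem_append_right (by omega), List.getElem_append_right (by omega)] at hne
      simpa only [Nat.add_right_comm j s.length 1, Nat.add_sub_cancel] using hne

theorem encard_changePositions_append_le (s t : List α) :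
    (changePositions (s ++ t)).encard ≤
      (changePositions s).encard + (changePositions t).encard + 1 :=
  calc (changePositions (s ++ t)).encard
    _ ≤ (changePositions s ∪ (· + s.length) '' changePositions t).encard + 1 :=
      (Set.encard_le_encard (changePositions_append_subset s t)).trans (Set.encard_insert_le _ _)
    _ ≤ (changePositions s).encard + ((· + s.length) '' changePositions t).encard + 1 := by
      grw [Set.encard_union_le]
    _ ≤ (changePositions s).encard + (changePositions t).encard + 1 := by
      grw [Set.encard_image_le]

theorem rlExpand_cons (f : α × ℕ) (l : List (α × ℕ)) :
    rlExpand (f :: l) = List.replicate f.2 f.1 ++ rlExpand l := rfl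

theorem encard_changePositions_rlExpand_le (l : List (α × ℕ)) :
    (changePositions (rlExpand l)).encard ≤ (l.length - 1 : ℕ) := by
  induction l with
  | nil => simp [rlExpand, changePositions]
  | cons f l ih =>
    rcases l with - | ⟨g, l⟩
    · simp [rlExpand, changePositions_replicate]
    · rw [rlExpand_cons]
      refine (encard_changePositions_append_le _ _).trans ?_
      rw [changePositions_replicate, Set.encard_empty, zero_add]
      exact add_le_add_left ih 1

theorem changePositions_nonempty {w : List α} (hw : ∃ x ∈ w, ∃ y ∈ w, x ≠ y) :
    (changePositions w).Nonempty := by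
  by_contra hempty
  have hchain : w.IsChain (· = ·) := by
    refine List.isChain_iff_getElem.mpr fun i hi => ?_
    by_contra hne
    exact hempty ⟨i, hi, hne⟩
  obtain ⟨x, hx, y, hy, hxy⟩ := hw
  exact hxy (hchain.pairwise.forall_of_forall (fun _ _ => rfl) hx hy)

theorem add_mem_changePositions {S w : List α} {i k : ℕ} (hk : w <+: S.drop k)
    (hi : i ∈ changePositions w) : k + i ∈ changePositions S := by
  obtain ⟨hlt, hne⟩ := hi
  have hlen : w.length ≤ S.length - k := by simpa using hk.length_le
  refine ⟨by omega, ?_⟩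
  simpa only [hk.getElem, List.getElem_drop, ← Nat.add_assoc] using hne

theorem encard_occurrences_le_encard_changePositions (S : List α) {w : List α}
    (hw : ∃ x ∈ w, ∃ y ∈ w, x ≠ y) :
    {k : ℕ | w <+: S.drop k}.encard ≤ (changePositions S).encard := by
  obtain ⟨i, hi⟩ := changePositions_nonempty hw
  exact Set.encard_le_encard_of_injOn (f := (· + i))
    (fun _ hk => add_mem_changePositions hk hi) (add_left_injective i).injOn

theorem occurrences_of_nonconstant_le_general (l : List (α × ℕ)) (w : List α)
    (hw : ∃ x ∈ w, ∃ y ∈ w, x ≠ y) :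
    {k : ℕ | w <+: (rlExpand l).drop k}.encard ≤ (l.length - 1 : ℕ) :=
  (encard_occurrences_le_encard_changePositions _ hw).trans (encard_changePositions_rlExpand_le l)

end

/-- If the RL factorization of `S` has `n` factors and `w` contains at least two distinct
characters, then `w` occurs at most `n - 1` times in `S` (occurrences are indexed from 0:
`w` occurs at position `k` iff it is a prefix of `S.drop k`). -/
theorem occurrences_of_nonconstant_le {α : Type*} (S : List α) (l : List (α × ℕ))
    (h : IsRLFact S l) (w : List α) (hw : ∃ x ∈ w, ∃ y ∈ w, x ≠ y) :
    {k : ℕ | w <+: S.drop k}.ncard ≤ l.length - 1 := by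
  rw [← h.1]
  exact ENat.toNat_le_of_le_natCast (occurrences_of_nonconstant_le_general l w hw)
end

section
/- Let X and Y be nonempty strings with RL factorizations X = a_1^{p_1} ⋯ a_n^{p_n} and Y = b_1^{q_1} ⋯ b_m^{q_m}, and let l ≥ 0 be the largest integer with l ≤ min(n, m) such that a_i = b_i and p_i = q_i for all 1 ≤ i ≤ l. Then lcp(X, Y) = p_1 + ⋯ + p_l + c, where c = min(p_{l+1}, q_{l+1}) if l < min(n, m) and a_{l+1} = b_{l+1}, and c = 0 otherwise. -/
/-- `lcpLen X Y` is the length of the longest common prefix of `X` and `Y`. -/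
def lcpLen {α : Type*} [DecidableEq α] (X Y : List α) : ℕ :=
  ((X.zip Y).takeWhile (fun p => p.1 = p.2)).length

/-!
Cutting off the `L` common factors removes a common prefix of length `p₁ + ⋯ + p_L`, so it suffices
to compare two factorizations whose first factors `(a, p)` and `(b, q)` differ. If `a ≠ b`, the
strings differ at once. If `a = b` and, say, `p < q`, the first string leaves its run of `a`s after
`p` characters, by maximality of the run, while the second one is still inside its own.
-/

section LcpLen

variable {α : Type*} [DecidableEq α]

theorem lcpLen_comm (X Y : List α) : lcpLen X Y = lcpLen Y X := by
  have hswap : (fun p : α × α => decide (p.1 = p.2)) ∘ Prod.swap = fun p => decide (p.1 = p.2) :=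
    funext fun p => decide_eq_decide.mpr eq_comm
  rw [lcpLen, lcpLen, ← List.zip_swap Y X, List.takeWhile_map, List.length_map, hswap]

theorem lcpLen_append_left (Z X Y : List α) :
    lcpLen (Z ++ X) (Z ++ Y) = Z.length + lcpLen X Y := by
  have hdiag : ∀ p ∈ Z.zip Z, decide (p.1 = p.2) = true := by
    simp [List.zip, List.zipWith_self]
  rw [lcpLen, List.zip_append rfl, List.takeWhile_append_of_pos hdiag, List.length_append,
    List.length_zip, min_self, lcpLen]

theorem lcpLen_eq_zero_iff {X Y : List α} :
    lcpLen X Y = 0 ↔ ∀ a ∈ X.head?, ∀ b ∈ Y.head?, a ≠ b := by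
  cases X <;> cases Y <;> simp [lcpLen, List.takeWhile_cons, apply_ite List.length]

theorem lcpLen_replicate_append_of_lt {a : α} {p q : ℕ} (hpq : p < q) {X : List α}
    (hX : a ∉ X.head?) (Y : List α) :
    lcpLen (List.replicate p a ++ X) (List.replicate q a ++ Y) = p := by
  obtain ⟨d, rfl⟩ := Nat.exists_eq_add_of_lt hpq
  have hzero : lcpLen X (List.replicate (d + 1) a ++ Y) = 0 := by
    rw [lcpLen_eq_zero_iff]
    rintro b hb c hc rfl
    obtain rfl : a = b := by simpa [List.replicate_succ] using hc
    exact hX hb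
  rw [add_assoc, List.replicate_add, List.append_assoc, lcpLen_append_left, hzero,
    List.length_replicate, add_zero]

theorem lcpLen_replicate_append_of_ne {a : α} {p q : ℕ} (hpq : p ≠ q) {X Y : List α}
    (hX : a ∉ X.head?) (hY : a ∉ Y.head?) :
    lcpLen (List.replicate p a ++ X) (List.replicate q a ++ Y) = min p q := by
  rcases hpq.lt_or_gt with hlt | hgt
  · rw [lcpLen_replicate_append_of_lt hlt hX, min_eq_left hlt.le]
  · rw [lcpLen_comm, lcpLen_replicate_append_of_lt hgt hY, min_eq_right hgt.le]

end LcpLen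

section RLFact

variable {α : Type*}

theorem rlExpand_append (l m : List (α × ℕ)) :
    rlExpand (l ++ m) = rlExpand l ++ rlExpand m := by
  simp [rlExpand]

theorem length_rlExpand (l : List (α × ℕ)) :
    (rlExpand l).length = (l.map Prod.snd).sum := by
  simp [rlExpand, List.length_flatten, Function.comp_def]

namespace IsRLFact

theorem drop {S : List α} {l : List (α × ℕ)} (h : IsRLFact S l) (k : ℕ) :
    IsRLFact (rlExpand (l.drop k)) (l.drop k) :=
  ⟨rfl, fun f hf => h.2.1 f (List.mem_of_mem_drop hf), List.IsChain.drop h.2.2 k⟩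

theorem head?_eq {S : List α} {l : List (α × ℕ)} (h : IsRLFact S l) :
    S.head? = l.head?.map Prod.fst := by
  obtain ⟨rfl, hpos, -⟩ := h
  cases l with
  | nil => rfl
  | cons f l =>
    have hf : f.2 ≠ 0 := Nat.one_le_iff_ne_zero.mp (hpos f List.mem_cons_self)
    simp [rlExpand_cons, List.head?_append, List.head?_replicate, hf]

theorem notMem_head?_rlExpand_tail {S : List α} {f : α × ℕ} {l : List (α × ℕ)}
    (h : IsRLFact S (f :: l)) : f.1 ∉ (rlExpand l).head? := by
  have hne : ∀ g ∈ l.head?, f.1 ≠ g.1 := (List.isChain_cons.mp h.2.2).1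
  have hhead : (rlExpand l).head? = l.head?.map Prod.fst := (h.drop 1).head?_eq
  simpa [hhead] using fun n hn => hne (f.1, n) hn rfl

theorem lcpLen_eq_ite_of_ne [DecidableEq α] {X Y : List α} {f g : α × ℕ} {s t : List (α × ℕ)}
    (hX : IsRLFact X (f :: s)) (hY : IsRLFact Y (g :: t)) (hfg : f ≠ g) :
    lcpLen X Y = if f.1 = g.1 then min f.2 g.2 else 0 := by
  split_ifs with hchar
  · have hexp : f.2 ≠ g.2 := fun h => hfg (Prod.ext hchar h)
    rw [← hX.1, ← hY.1, rlExpand_cons, rlExpand_cons, ← hchar]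
    exact lcpLen_replicate_append_of_ne hexp hX.notMem_head?_rlExpand_tail
      (hchar ▸ hY.notMem_head?_rlExpand_tail)
  · rw [lcpLen_eq_zero_iff, hX.head?_eq, hY.head?_eq]
    simpa using hchar

end IsRLFact

theorem lcpLen_rlExpand_of_take_eq [DecidableEq α] {l m : List (α × ℕ)} {k : ℕ}
    (h : l.take k = m.take k) :
    lcpLen (rlExpand l) (rlExpand m) = ((l.take k).map Prod.snd).sum +
      lcpLen (rlExpand (l.drop k)) (rlExpand (m.drop k)) := by
  conv_lhs => rw [← l.take_append_drop k, ← m.take_append_drop k, ← h]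
  rw [rlExpand_append, rlExpand_append, lcpLen_append_left, length_rlExpand]

end RLFact

/-- Longest common prefix via RL factorizations: if `L` is the largest integer
`≤ min n m` such that the first `L` RL factors of `X` and `Y` agree, then
`lcp(X,Y) = p₁ + ⋯ + p_L + c`, where `c = min (p_{L+1}, q_{L+1})` when `L < min n m` and
`a_{L+1} = b_{L+1}`, and `c = 0` otherwise. -/
theorem lcp_of_rl_facts {α : Type*} [DecidableEq α] (X Y : List α) (hX : X ≠ []) (hY : Y ≠ [])
    (fx fy : List (α × ℕ)) (hfx : IsRLFact X fx) (hfy : IsRLFact Y fy)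
    (L : ℕ) (hL : L ≤ min fx.length fy.length)
    (hagree : ∀ i < L, fx[i]? = fy[i]?)
    (hmax : L = min fx.length fy.length ∨ fx[L]? ≠ fy[L]?) :
    lcpLen X Y = ((fx.take L).map Prod.snd).sum +
      (match fx[L]?, fy[L]? with
       | some (x, p), some (y, q) => if x = y then min p q else 0
       | _, _ => 0) := by
  have htake : fx.take L = fy.take L := by
    ext1 i
    rw [List.getElem?_take, List.getElem?_take]
    split_ifs with hi
    exacts [hagree i hi, rfl]
  rw [← hfx.1, ← hfy.1, lcpLen_rlExpand_of_take_eq htake]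
  congr 1
  have hXdrop := hfx.drop L
  have hYdrop := hfy.drop L
  have hnext : fx.drop L = [] ∨ fy.drop L = [] ∨ (fx.drop L).head? ≠ (fy.drop L).head? := by
    rw [List.drop_eq_nil_iff, List.drop_eq_nil_iff, List.head?_drop, List.head?_drop]
    rcases hmax with hmin | hne
    · omega
    · exact .inr (.inr hne)
  rw [← List.head?_drop, ← List.head?_drop]
  generalize fx.drop L = l, fy.drop L = m at *
  rcases l with _ | ⟨f, s⟩
  · simp [rlExpand, lcpLen]
  rcases m with _ | ⟨g, t⟩
  · simp [rlExpand, lcpLen]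
  · exact hXdrop.lcpLen_eq_ite_of_ne hYdrop (by simpa using hnext)
end
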